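/- Let f be a balanced dominating function on Grid_{m×n} with m, n ≥ 8, and set a_{i,j} = f(v_{i,j}). Then a_{3,3} = a_{2,2} and a_{4,4} = −a_{2,2}; moreover a_{1,1} + a_{2,2} ∈ {−1, 0, 1} and a_{1,1} = 0 implies a_{2,2} = 0. -/

import Mathlib

/-!
Extend `f` by zero to an array `a` on the lattice, and continue it oddly across the two far sides
of the grid. The continuation has the same labels, and its neighbourhood sums still vanish, now in
a rectangle large enough to contain the triangle `i + j ≤ 8`.

There, adding the equations at `(i, j)` and `(j, i)` gives a recurrence for `a i j + a j i` which
starts from the diagonal and works outwards, so each `a 1 k + a k 1` is an integer combination of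
the diagonal entries:
`a 1 4 + a 4 1 = a 1 1 + 3 a 2 2`, `a 1 6 + a 6 1 = 3 a 2 2 - 5 a 3 3`,
`a 1 8 + a 8 1 = -a 1 1 + 17 a 2 2 - 12 a 3 3 + 7 a 4 4`.
As the left-hand sides lie in `[-2, 2]`, these coefficients force the relations.
-/


open Finset

open scoped Classical in
noncomputable def closedSum {V : Type*} [Fintype V] (G : SimpleGraph V) (f : V → ℤ) (v : V) : ℤ :=
  f v + ∑ u ∈ Finset.univ.filter (fun u => G.Adj v u), f u

def IsBDF {V : Type*} [Fintype V] (G : SimpleGraph V) (f : V → ℤ) : Prop :=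
  (∀ v, f v = -1 ∨ f v = 0 ∨ f v = 1) ∧ ∀ v, closedSum G f v = 0


/-- The grid graph on an m × n lattice: vertices (i,j), edges between horizontally
or vertically adjacent lattice points. -/
def gridGraph (m n : ℕ) : SimpleGraph (Fin m × Fin n) :=
  SimpleGraph.fromRel (fun p q =>
    (p.1 = q.1 ∧ (q.2 : ℕ) = (p.2 : ℕ) + 1) ∨
    (p.2 = q.2 ∧ (q.1 : ℕ) = (p.1 : ℕ) + 1))

section NullArray

variable {M : Type*} [AddCommGroup M] {a : ℤ → ℤ → M} {i j p q N : ℤ}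

/-- The closed neighbourhood sum of an array on the lattice `ℤ × ℤ`. -/
def crossSum (a : ℤ → ℤ → M) (i j : ℤ) : M :=
  a i j + a (i - 1) j + a (i + 1) j + a i (j - 1) + a i (j + 1)

theorem crossSum_swap (a : ℤ → ℤ → M) (i j : ℤ) :
    crossSum (Function.swap a) i j = crossSum a j i := by
  simp only [crossSum, Function.swap]
  abel

/-- An array vanishing on the four lines that bound the rectangle `[0, p] × [0, q]`, all of whose
closed neighbourhood sums in the interior are zero. A balanced dominating function on the
`m × n` grid, indexed from `1`, is such an array with `p = m + 1` and `q = n + 1`. -/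
structure IsNullArray (a : ℤ → ℤ → M) (p q : ℤ) : Prop where
  row_zero (j : ℤ) : a 0 j = 0
  row_last (j : ℤ) : a p j = 0
  col_zero (i : ℤ) : a i 0 = 0
  col_last (i : ℤ) : a i q = 0
  crossSum_eq_zero {i j : ℤ} : 0 < i → i < p → 0 < j → j < q → crossSum a i j = 0

theorem IsNullArray.swap (h : IsNullArray a p q) : IsNullArray (Function.swap a) q p where
  row_zero := h.col_zero
  row_last := h.col_last
  col_zero := h.row_zero
  col_last := h.row_last
  crossSum_eq_zero hi hiq hj hjp :=
    (crossSum_swap a _ _).trans (h.crossSum_eq_zero hj hjp hi hiq)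

/-- The odd reflection of an array across the row `p`: rows beyond `p` are replaced by the
negatives of their mirror images. It continues a null array to twice the height. -/
def reflectRows (p : ℤ) (a : ℤ → ℤ → M) (i j : ℤ) : M :=
  if i ≤ p then a i j else -a (2 * p - i) j

theorem reflectRows_of_le (hi : i ≤ p) : reflectRows p a i j = a i j := if_pos hi

theorem reflectRows_of_ge (ha : a p j = 0) (hi : p ≤ i) :
    reflectRows p a i j = -a (2 * p - i) j := by
  rcases hi.eq_or_lt with rfl | hi
  · rw [reflectRows_of_le le_rfl, two_mul, add_sub_cancel_right, ha, neg_zero]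
  · exact if_neg hi.not_ge

theorem IsNullArray.crossSum_reflectRows (h : IsNullArray a p q) (hi : 0 < i) (hip : i < 2 * p)
    (hj : 0 < j) (hjq : j < q) : crossSum (reflectRows p a) i j = 0 := by
  have below {k l : ℤ} (hk : k ≤ p) : reflectRows p a k l = a k l := reflectRows_of_le hk
  have above {k l : ℤ} (hk : p ≤ k) : reflectRows p a k l = -a (2 * p - k) l :=
    reflectRows_of_ge (h.row_last l) hk
  rcases lt_trichotomy i p with hlt | rfl | hgt
  · rw [crossSum, below (by lia), below (by lia), below (by lia), below (by lia), below (by lia)]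
    exact h.crossSum_eq_zero hi hlt hj hjq
  · rw [crossSum, above (by lia : i ≤ i + 1), below le_rfl, below (by lia), below le_rfl,
      below le_rfl, h.row_last, h.row_last, h.row_last, show 2 * i - (i + 1) = i - 1 by ring]
    abel
  · have mirrored := h.crossSum_eq_zero (i := 2 * p - i) (by lia) (by lia) hj hjq
    rw [crossSum, above (by lia), above (by lia), above (by lia), above (by lia), above (by lia),
      ← neg_eq_zero, ← mirrored, crossSum, show 2 * p - (i - 1) = 2 * p - i + 1 by ring,
      show 2 * p - (i + 1) = 2 * p - i - 1 by ring]
    abel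

theorem isNullArray_reflectRows (h : IsNullArray a p q) (hp : 0 ≤ p) :
    IsNullArray (reflectRows p a) (2 * p) q where
  row_zero j := (reflectRows_of_le hp).trans (h.row_zero j)
  row_last j := by
    rw [reflectRows_of_ge (h.row_last j) (by lia), sub_self, h.row_zero, neg_zero]
  col_zero i := by simp only [reflectRows, h.col_zero, neg_zero, ite_self]
  col_last i := by simp only [reflectRows, h.col_last, neg_zero, ite_self]
  crossSum_eq_zero := h.crossSum_reflectRows

theorem abs_reflectRows_le {a : ℤ → ℤ → ℤ} {c : ℤ} (ha : ∀ i j, |a i j| ≤ c) (p i j : ℤ) :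
    |reflectRows p a i j| ≤ c := by
  unfold reflectRows
  split_ifs
  · exact ha i j
  · exact (abs_neg _).trans_le (ha _ j)

theorem IsNullArray.exists_double {a : ℤ → ℤ → ℤ} {c : ℤ} (h : IsNullArray a p q) (hp : 0 ≤ p)
    (hq : 0 ≤ q) (ha : ∀ i j, |a i j| ≤ c) :
    ∃ b : ℤ → ℤ → ℤ, IsNullArray b (2 * p) (2 * q) ∧ (∀ i j, |b i j| ≤ c) ∧
      ∀ i j, i ≤ p → j ≤ q → b i j = a i j := by
  have doubled := (isNullArray_reflectRows (isNullArray_reflectRows h hp).swap hq).swap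
  refine ⟨_, doubled, fun i j ↦ ?_, fun i j hi hj ↦ ?_⟩
  · exact abs_reflectRows_le (fun k l ↦ abs_reflectRows_le ha p l k) q j i
  · exact (reflectRows_of_le hj).trans (reflectRows_of_le hi)

/-- An array vanishing on both axes, whose closed neighbourhood sums are zero at the points
`(i, j)` of the positive quadrant with `i + j ≤ N`. -/
structure IsNullCorner (a : ℤ → ℤ → M) (N : ℤ) : Prop where
  row_zero (j : ℤ) : a 0 j = 0
  col_zero (i : ℤ) : a i 0 = 0
  crossSum_eq_zero {i j : ℤ} : 0 < i → 0 < j → i + j ≤ N → crossSum a i j = 0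

theorem IsNullArray.isNullCorner (h : IsNullArray a p q) (hp : N ≤ p) (hq : N ≤ q) :
    IsNullCorner a N where
  row_zero := h.row_zero
  col_zero := h.col_zero
  crossSum_eq_zero hi hj hij := h.crossSum_eq_zero hi (by lia) hj (by lia)

/-- The sum of the entries at `(i, j)` and `(j, i)`: near the corner of a null array, unlike the
entries themselves, it is determined by the diagonal. -/
def symmSum (a : ℤ → ℤ → M) (i j : ℤ) : M := a i j + a j i

theorem symmSum_self (a : ℤ → ℤ → M) (i : ℤ) : symmSum a i i = 2 • a i i := (two_nsmul _).symm

theorem abs_symmSum_le {a : ℤ → ℤ → ℤ} {c : ℤ} (ha : ∀ i j, |a i j| ≤ c) (i j : ℤ) :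
    |symmSum a i j| ≤ 2 * c :=
  (abs_add_le _ _).trans (by linarith [ha i j, ha j i])

namespace IsNullCorner

theorem symmSum_zero_left (h : IsNullCorner a N) (j : ℤ) : symmSum a 0 j = 0 := by
  rw [symmSum, h.row_zero, h.col_zero, add_zero]

theorem symmSum_self_add_one (h : IsNullCorner a N) (i : ℤ) (hN : i + i ≤ N)
    (hi : 0 < i := by decide) :
    symmSum a i (i + 1) = -a i i - symmSum a (i - 1) i := by
  rw [← sub_eq_zero, ← h.crossSum_eq_zero hi hi hN, crossSum, symmSum, symmSum]
  abel

theorem symmSum_add_one (h : IsNullCorner a N) (i j : ℤ) (hN : i + j ≤ N)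
    (hi : 0 < i := by decide) (hj : 0 < j := by decide) :
    symmSum a i (j + 1) =
      -symmSum a i j - symmSum a i (j - 1) - symmSum a (i - 1) j - symmSum a (i + 1) j := by
  have sum_eq_zero : crossSum a i j + crossSum a j i = 0 := by
    rw [h.crossSum_eq_zero hi hj hN, h.crossSum_eq_zero hj hi (by lia), add_zero]
  rw [← sub_eq_zero, ← sum_eq_zero]
  simp only [crossSum, symmSum]
  abel

theorem symmSum_one_two (h : IsNullCorner a N) (hN : 2 ≤ N) :
    symmSum a 1 2 = -a 1 1 := by
  calc symmSum a 1 2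
    _ = -a 1 1 - symmSum a 0 1 := h.symmSum_self_add_one 1 hN
    _ = _ := by rw [h.symmSum_zero_left]; abel

theorem symmSum_two_three (h : IsNullCorner a N) (hN : 4 ≤ N) :
    symmSum a 2 3 = a 1 1 - a 2 2 := by
  calc symmSum a 2 3
    _ = -a 2 2 - symmSum a 1 2 := h.symmSum_self_add_one 2 hN
    _ = _ := by rw [h.symmSum_one_two (by lia)]; abel

theorem symmSum_three_four (h : IsNullCorner a N) (hN : 6 ≤ N) :
    symmSum a 3 4 = -a 1 1 + a 2 2 - a 3 3 := by
  calc symmSum a 3 4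
    _ = -a 3 3 - symmSum a 2 3 := h.symmSum_self_add_one 3 hN
    _ = _ := by rw [h.symmSum_two_three (by lia)]; abel

theorem symmSum_four_five (h : IsNullCorner a N) (hN : 8 ≤ N) :
    symmSum a 4 5 = a 1 1 - a 2 2 + a 3 3 - a 4 4 := by
  calc symmSum a 4 5
    _ = -a 4 4 - symmSum a 3 4 := h.symmSum_self_add_one 4 hN
    _ = _ := by rw [h.symmSum_three_four (by lia)]; abel

theorem symmSum_one_three (h : IsNullCorner a N) (hN : 3 ≤ N) :
    symmSum a 1 3 = -a 1 1 - 2 • a 2 2 := by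
  calc symmSum a 1 3
    _ = -symmSum a 1 2 - symmSum a 1 1 - symmSum a 0 2 - symmSum a 2 2 := h.symmSum_add_one 1 2 hN
    _ = _ := by rw [h.symmSum_one_two (by lia), symmSum_self, h.symmSum_zero_left,
        symmSum_self]; abel

theorem symmSum_two_four (h : IsNullCorner a N) (hN : 5 ≤ N) :
    symmSum a 2 4 = a 2 2 - 2 • a 3 3 := by
  calc symmSum a 2 4
    _ = -symmSum a 2 3 - symmSum a 2 2 - symmSum a 1 3 - symmSum a 3 3 := h.symmSum_add_one 2 3 hN
    _ = _ := by rw [h.symmSum_two_three (by lia), symmSum_self, h.symmSum_one_three (by lia),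
        symmSum_self]; abel

theorem symmSum_three_five (h : IsNullCorner a N) (hN : 7 ≤ N) :
    symmSum a 3 5 = a 1 1 - 2 • a 2 2 + a 3 3 - 2 • a 4 4 := by
  calc symmSum a 3 5
    _ = -symmSum a 3 4 - symmSum a 3 3 - symmSum a 2 4 - symmSum a 4 4 := h.symmSum_add_one 3 4 hN
    _ = _ := by rw [h.symmSum_three_four (by lia), symmSum_self, h.symmSum_two_four (by lia),
        symmSum_self]; abel

theorem symmSum_one_four (h : IsNullCorner a N) (hN : 4 ≤ N) :
    symmSum a 1 4 = a 1 1 + 3 • a 2 2 := by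
  calc symmSum a 1 4
    _ = -symmSum a 1 3 - symmSum a 1 2 - symmSum a 0 3 - symmSum a 2 3 := h.symmSum_add_one 1 3 hN
    _ = _ := by rw [h.symmSum_one_three (by lia), h.symmSum_one_two (by lia), h.symmSum_zero_left,
        h.symmSum_two_three (by lia)]; abel

theorem symmSum_two_five (h : IsNullCorner a N) (hN : 6 ≤ N) :
    symmSum a 2 5 = -a 1 1 - 4 • a 2 2 + 3 • a 3 3 := by
  calc symmSum a 2 5
    _ = -symmSum a 2 4 - symmSum a 2 3 - symmSum a 1 4 - symmSum a 3 4 := h.symmSum_add_one 2 4 hN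
    _ = _ := by rw [h.symmSum_two_four (by lia), h.symmSum_two_three (by lia),
        h.symmSum_one_four (by lia), h.symmSum_three_four (by lia)]; abel

theorem symmSum_three_six (h : IsNullCorner a N) (hN : 8 ≤ N) :
    symmSum a 3 6 = 6 • a 2 2 - 4 • a 3 3 + 3 • a 4 4 := by
  calc symmSum a 3 6
    _ = -symmSum a 3 5 - symmSum a 3 4 - symmSum a 2 5 - symmSum a 4 5 := h.symmSum_add_one 3 5 hN
    _ = _ := by rw [h.symmSum_three_five (by lia), h.symmSum_three_four (by lia),
        h.symmSum_two_five (by lia), h.symmSum_four_five (by lia)]; abel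

theorem symmSum_one_five (h : IsNullCorner a N) (hN : 5 ≤ N) :
    symmSum a 1 5 = 2 • a 3 3 - 2 • a 2 2 := by
  calc symmSum a 1 5
    _ = -symmSum a 1 4 - symmSum a 1 3 - symmSum a 0 4 - symmSum a 2 4 := h.symmSum_add_one 1 4 hN
    _ = _ := by rw [h.symmSum_one_four (by lia), h.symmSum_one_three (by lia), h.symmSum_zero_left,
        h.symmSum_two_four (by lia)]; abel

theorem symmSum_two_six (h : IsNullCorner a N) (hN : 7 ≤ N) :
    symmSum a 2 6 = 7 • a 2 2 - 4 • a 3 3 + 2 • a 4 4 := by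
  calc symmSum a 2 6
    _ = -symmSum a 2 5 - symmSum a 2 4 - symmSum a 1 5 - symmSum a 3 5 := h.symmSum_add_one 2 5 hN
    _ = _ := by rw [h.symmSum_two_five (by lia), h.symmSum_two_four (by lia),
        h.symmSum_one_five (by lia), h.symmSum_three_five (by lia)]; abel

theorem symmSum_one_six (h : IsNullCorner a N) (hN : 6 ≤ N) :
    symmSum a 1 6 = 3 • a 2 2 - 5 • a 3 3 := by
  calc symmSum a 1 6
    _ = -symmSum a 1 5 - symmSum a 1 4 - symmSum a 0 5 - symmSum a 2 5 := h.symmSum_add_one 1 5 hN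
    _ = _ := by rw [h.symmSum_one_five (by lia), h.symmSum_one_four (by lia), h.symmSum_zero_left,
        h.symmSum_two_five (by lia)]; abel

theorem symmSum_two_seven (h : IsNullCorner a N) (hN : 8 ≤ N) :
    symmSum a 2 7 = a 1 1 - 12 • a 2 2 + 10 • a 3 3 - 5 • a 4 4 := by
  calc symmSum a 2 7
    _ = -symmSum a 2 6 - symmSum a 2 5 - symmSum a 1 6 - symmSum a 3 6 := h.symmSum_add_one 2 6 hN
    _ = _ := by rw [h.symmSum_two_six (by lia), h.symmSum_two_five (by lia),
        h.symmSum_one_six (by lia), h.symmSum_three_six (by lia)]; abel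

theorem symmSum_one_seven (h : IsNullCorner a N) (hN : 7 ≤ N) :
    symmSum a 1 7 = 7 • a 3 3 - 8 • a 2 2 - 2 • a 4 4 := by
  calc symmSum a 1 7
    _ = -symmSum a 1 6 - symmSum a 1 5 - symmSum a 0 6 - symmSum a 2 6 := h.symmSum_add_one 1 6 hN
    _ = _ := by rw [h.symmSum_one_six (by lia), h.symmSum_one_five (by lia), h.symmSum_zero_left,
        h.symmSum_two_six (by lia)]; abel

theorem symmSum_one_eight (h : IsNullCorner a N) (hN : 8 ≤ N) :
    symmSum a 1 8 = -a 1 1 + 17 • a 2 2 - 12 • a 3 3 + 7 • a 4 4 := by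
  calc symmSum a 1 8
    _ = -symmSum a 1 7 - symmSum a 1 6 - symmSum a 0 7 - symmSum a 2 7 := h.symmSum_add_one 1 7 hN
    _ = _ := by rw [h.symmSum_one_seven (by lia), h.symmSum_one_six (by lia), h.symmSum_zero_left,
        h.symmSum_two_seven (by lia)]; abel

variable {a : ℤ → ℤ → ℤ}

theorem three_three_eq_two_two (h : IsNullCorner a N) (hN : 6 ≤ N) (ha : ∀ i j, |a i j| ≤ 1) :
    a 3 3 = a 2 2 := by
  have outer_le : |3 * a 2 2 - 5 * a 3 3| ≤ 2 := by
    simpa [h.symmSum_one_six (by lia)] using abs_symmSum_le ha 1 6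
  simp only [abs_le] at ha outer_le
  grind [ha 2 2, ha 3 3]

theorem four_four_eq_neg_two_two (h : IsNullCorner a N) (hN : 8 ≤ N) (ha : ∀ i j, |a i j| ≤ 1) :
    a 4 4 = -a 2 2 := by
  have outer_le : |-a 1 1 + 17 * a 2 2 - 12 * a 3 3 + 7 * a 4 4| ≤ 2 := by
    simpa [h.symmSum_one_eight hN] using abs_symmSum_le ha 1 8
  rw [h.three_three_eq_two_two (by lia) ha] at outer_le
  simp only [abs_le] at ha outer_le
  grind [ha 1 1, ha 2 2, ha 4 4]

theorem abs_one_one_add_three_mul_le (h : IsNullCorner a N) (hN : 4 ≤ N)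
    (ha : ∀ i j, |a i j| ≤ 1) : |a 1 1 + 3 * a 2 2| ≤ 2 := by
  simpa [h.symmSum_one_four (by lia)] using abs_symmSum_le ha 1 4

theorem abs_one_one_add_two_two_le (h : IsNullCorner a N) (hN : 4 ≤ N)
    (ha : ∀ i j, |a i j| ≤ 1) : |a 1 1 + a 2 2| ≤ 1 := by
  have outer_le := h.abs_one_one_add_three_mul_le hN ha
  simp only [abs_le] at ha outer_le ⊢
  grind [ha 1 1, ha 2 2]

theorem two_two_eq_zero_of_one_one (h : IsNullCorner a N) (hN : 4 ≤ N)
    (ha : ∀ i j, |a i j| ≤ 1) (h_one_one : a 1 1 = 0) : a 2 2 = 0 := by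
  have outer_le := h.abs_one_one_add_three_mul_le hN ha
  rw [h_one_one, zero_add, abs_le] at outer_le
  lia

end IsNullCorner

end NullArray

section GridGraph

variable {m n : ℕ}

/-- The array on `ℤ × ℤ` whose entry at `(i, j)` is `f v_{i,j}` (indexed from `1`), extended by
zero outside the grid. Writing it as a sum over the grid lets neighbourhood sums be compared
term by term. -/
def padded (f : Fin m × Fin n → ℤ) (i j : ℤ) : ℤ :=
  ∑ u : Fin m × Fin n, if (u.1 + 1 : ℤ) = i ∧ (u.2 + 1 : ℤ) = j then f u else 0

theorem padded_apply (f : Fin m × Fin n → ℤ) (v : Fin m × Fin n) :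
    padded f (v.1 + 1) (v.2 + 1) = f v := by
  have same_position (u : Fin m × Fin n) :
      (u.1 + 1 : ℤ) = v.1 + 1 ∧ (u.2 + 1 : ℤ) = v.2 + 1 ↔ u = v := by
    rw [Prod.ext_iff, Fin.ext_iff, Fin.ext_iff]
    lia
  simp only [padded, same_position, Finset.sum_ite_eq', Finset.mem_univ, if_true]

theorem padded_eq_zero (f : Fin m × Fin n → ℤ) {i j : ℤ}
    (hij : ∀ u : Fin m × Fin n, ¬((u.1 + 1 : ℤ) = i ∧ (u.2 + 1 : ℤ) = j)) : padded f i j = 0 :=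
  Finset.sum_eq_zero fun u _ ↦ if_neg (hij u)

theorem abs_padded_le {f : Fin m × Fin n → ℤ} {c : ℤ} (hc : 0 ≤ c) (hf : ∀ v, |f v| ≤ c)
    (i j : ℤ) : |padded f i j| ≤ c := by
  by_cases hij : ∃ u : Fin m × Fin n, (u.1 + 1 : ℤ) = i ∧ (u.2 + 1 : ℤ) = j
  · obtain ⟨u, rfl, rfl⟩ := hij
    rw [padded_apply]
    exact hf u
  · rwa [padded_eq_zero f (not_exists.mp hij), abs_zero]

theorem closedSum_gridGraph (f : Fin m × Fin n → ℤ) (v : Fin m × Fin n) :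
    closedSum (gridGraph m n) f v = crossSum (padded f) (v.1 + 1) (v.2 + 1) := by
  rw [closedSum, crossSum, padded_apply, Finset.sum_filter]
  simp only [add_assoc]
  congr 1
  simp only [padded, ← Finset.sum_add_distrib]
  refine Finset.sum_congr rfl fun u _ ↦ ?_
  simp only [gridGraph, SimpleGraph.fromRel_adj, ne_eq, Prod.ext_iff, Fin.ext_iff]
  split_ifs <;> lia

theorem exists_fin_add_one_eq {k : ℕ} {i : ℤ} (hi : 0 < i) (hik : i < k + 1) :
    ∃ r : Fin k, (r + 1 : ℤ) = i :=
  ⟨⟨(i - 1).toNat, by lia⟩, by dsimp only; lia⟩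

theorem IsBDF.isNullArray_padded {f : Fin m × Fin n → ℤ} (hf : IsBDF (gridGraph m n) f) :
    IsNullArray (padded f) (m + 1) (n + 1) where
  row_zero j := padded_eq_zero f (by lia)
  row_last j := padded_eq_zero f (by omega)
  col_zero i := padded_eq_zero f (by lia)
  col_last i := padded_eq_zero f (by omega)
  crossSum_eq_zero hi him hj hjn := by
    obtain ⟨r, rfl⟩ := exists_fin_add_one_eq hi him
    obtain ⟨c, rfl⟩ := exists_fin_add_one_eq hj hjn
    exact (closedSum_gridGraph f (r, c)).symm.trans (hf.2 (r, c))

theorem IsBDF.abs_le_one {V : Type*} [Fintype V] {G : SimpleGraph V} {f : V → ℤ}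
    (hf : IsBDF G f) (v : V) : |f v| ≤ 1 := by
  rcases hf.1 v with h | h | h <;> simp [h]

end GridGraph

theorem grid_bdf_diagonal_relations_general (m n : ℕ) (hm : 4 ≤ m) (hn : 4 ≤ n)
    (f : Fin m × Fin n → ℤ) (hf : IsBDF (gridGraph m n) f) :
    f (⟨2, by omega⟩, ⟨2, by omega⟩) = f (⟨1, by omega⟩, ⟨1, by omega⟩) ∧
    f (⟨3, by omega⟩, ⟨3, by omega⟩) = -f (⟨1, by omega⟩, ⟨1, by omega⟩) ∧
    (f (⟨0, by omega⟩, ⟨0, by omega⟩) + f (⟨1, by omega⟩, ⟨1, by omega⟩) = -1 ∨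
     f (⟨0, by omega⟩, ⟨0, by omega⟩) + f (⟨1, by omega⟩, ⟨1, by omega⟩) = 0 ∨
     f (⟨0, by omega⟩, ⟨0, by omega⟩) + f (⟨1, by omega⟩, ⟨1, by omega⟩) = 1) ∧
    (f (⟨0, by omega⟩, ⟨0, by omega⟩) = 0 → f (⟨1, by omega⟩, ⟨1, by omega⟩) = 0) := by
  obtain ⟨b, b_null, b_le, b_eq⟩ := hf.isNullArray_padded.exists_double (by lia) (by lia)
    (abs_padded_le zero_le_one hf.abs_le_one)
  have corner : IsNullCorner b 8 := b_null.isNullCorner (by lia) (by lia)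
  have diagonal (i : ℕ) (hi : i < 4) : f (⟨i, by lia⟩, ⟨i, by lia⟩) = b (i + 1) (i + 1) := by
    rw [b_eq _ _ (by lia) (by lia)]
    exact (padded_apply f (⟨i, by lia⟩, ⟨i, by lia⟩)).symm
  rw [diagonal 0 (by lia), diagonal 1 (by lia), diagonal 2 (by lia), diagonal 3 (by lia)]
  change b 3 3 = b 2 2 ∧ b 4 4 = -b 2 2 ∧
    (b 1 1 + b 2 2 = -1 ∨ b 1 1 + b 2 2 = 0 ∨ b 1 1 + b 2 2 = 1) ∧ (b 1 1 = 0 → b 2 2 = 0)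
  refine ⟨corner.three_three_eq_two_two (by lia) b_le,
    corner.four_four_eq_neg_two_two le_rfl b_le, ?_,
    corner.two_two_eq_zero_of_one_one (by lia) b_le⟩
  have := Int.abs_le_one_iff.mp (corner.abs_one_one_add_two_two_le (by lia) b_le)
  lia

/-- For a BDF on Grid_{m×n} with m, n ≥ 8 (entries a_{i,j}, 1-indexed):
a_{3,3} = a_{2,2}, a_{4,4} = -a_{2,2}, a_{1,1} + a_{2,2} ∈ {-1,0,1}, and
a_{1,1} = 0 implies a_{2,2} = 0. -/
theorem grid_bdf_diagonal_relations (m n : ℕ) (hm : 8 ≤ m) (hn : 8 ≤ n)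
    (f : Fin m × Fin n → ℤ) (hf : IsBDF (gridGraph m n) f) :
    f (⟨2, by omega⟩, ⟨2, by omega⟩) = f (⟨1, by omega⟩, ⟨1, by omega⟩) ∧
    f (⟨3, by omega⟩, ⟨3, by omega⟩) = -f (⟨1, by omega⟩, ⟨1, by omega⟩) ∧
    (f (⟨0, by omega⟩, ⟨0, by omega⟩) + f (⟨1, by omega⟩, ⟨1, by omega⟩) = -1 ∨
     f (⟨0, by omega⟩, ⟨0, by omega⟩) + f (⟨1, by omega⟩, ⟨1, by omega⟩) = 0 ∨
     f (⟨0, by omega⟩, ⟨0, by omega⟩) + f (⟨1, by omega⟩, ⟨1, by omega⟩) = 1) ∧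
    (f (⟨0, by omega⟩, ⟨0, by omega⟩) = 0 → f (⟨1, by omega⟩, ⟨1, by omega⟩) = 0) :=
  grid_bdf_diagonal_relations_general m n (by lia) (by lia) f hf
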